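/- arXiv:2308.11285 — 4 statements merged into one kernel-verified Lean document; each statement's English description precedes it below -/
import Mathlib

section
/- Flow-through lemma. Let i ∈ R and let x : A → ℝ_{≥0} satisfy flow conservation Σ_{a∈δ^in(v)} x_a = Σ_{a∈δ^out(v)} x_a at every event v ∈ V∖V₀ and the pick-up constraint Σ_{v∈V_{i⁺}} Σ_{a∈δ^in(v)} x_a = 1. Then Σ_{v∈V_{i⁻}} Σ_{a∈δ^in(v)} x_a = 1, i.e., the total flow entering the delivery events of request i also equals 1. -/
/-!
The customers aboard a vehicle do not change while it traverses an arc `(v, w)`: the set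
`aboardAfter v` aboard when leaving `v` equals the set `aboardBefore w` aboard when arriving at `w`
(`aboardAfter_eq_aboardBefore`). Counting the flow on the arcs that carry customer `i` once by tails
and once by heads therefore gives the same number (`sum_outflow_aboardAfter`). By flow conservation
the tail count can be written with inflows as well (the depot event carries nobody and does not
contribute), and at a single event the two memberships of `i` differ by `+1` at pick-ups of `i`,
by `-1` at deliveries of `i`, and by `0` elsewhere. Hence the total inflow into the pick-up events
of `i` equals the total inflow into its delivery events.
-/

open scoped Classical
open Finset

/-- Locations of a DARP instance with `n` requests: the depot, pick-up
locations `i⁺` and delivery locations `i⁻`. -/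
inductive Loc (n : ℕ) : Type
  | depot : Loc n
  | pick  : Fin n → Loc n
  | drop  : Fin n → Loc n
  deriving DecidableEq, Fintype

/-- An event of the event-based graph: the location just visited together with
the set of the other customers currently aboard (the `Q`-tuple representation
`(v₁, v₂, …, v_Q)` with entries in decreasing order padded by zeros encodes
exactly this data). -/
structure Event (n : ℕ) : Type where
  loc : Loc n
  others : Finset (Fin n)
  deriving DecidableEq, Fintype

variable {n : ℕ}

/-- Service time attached to a location (`s₀ = 0`, `s_{i⁺} = s_{i⁻} = s_i`). -/
def sLoc (s : Fin n → ℝ) : Loc n → ℝ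
  | .depot => 0
  | .pick i => s i
  | .drop i => s i

/-- Total load of all customers encoded in an event. -/
def Event.load (q : Fin n → ℕ) (v : Event n) : ℕ :=
  (match v.loc with
    | .depot => 0
    | .pick i => q i
    | .drop i => q i) + ∑ j ∈ v.others, q j

/-- Valid events (node set `V` of the event-based graph): at most `Q - 1`
other customers, total load at most the capacity `Q`, and the customer of
the current location is not repeated among the others; the depot event
carries no customers. -/
def EventOK (Q : ℕ) (q : Fin n → ℕ) (v : Event n) : Prop :=
  v.others.card + 1 ≤ Q ∧ v.load q ≤ Q ∧
    (match v.loc with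
      | .depot => v.others = ∅
      | .pick i => i ∉ v.others
      | .drop i => i ∉ v.others)

/-- The combinatorial shape of feasible direct transitions between events
(the arc sets `A₁, …, A₆` of Gaul, Klamroth and Stiglmayr 2022). -/
def ArcShape (v w : Event n) : Prop :=
  match v.loc, w.loc with
  | .pick i, .drop j => insert i v.others = insert j w.others
  | .pick i, .pick _ => insert i v.others = w.others
  | .drop i, .pick j => i ≠ j ∧ v.others = w.others
  | .drop _, .drop j => v.others = insert j w.others
  | .drop _, .depot => v.others = ∅
  | .depot, .pick _ => w.others = ∅
  | _, _ => False

/-- The depot event `(0, …, 0)`. -/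
def depotEvent (n : ℕ) : Event n := ⟨.depot, ∅⟩

/-- The arc set `A` of the event-based graph. -/
def Arc (Q : ℕ) (q : Fin n → ℕ) (v w : Event n) : Prop :=
  EventOK Q q v ∧ EventOK Q q w ∧ ArcShape v w

/-- `Σ_{a ∈ δ^in(v)} x_a` with respect to an arc relation `Ar`. -/
noncomputable def inflow (Ar : Event n → Event n → Prop)
    (x : Event n → Event n → ℝ) (v : Event n) : ℝ :=
  ∑ w : Event n, if Ar w v then x w v else 0

/-- `Σ_{a ∈ δ^out(v)} x_a` with respect to an arc relation `Ar`. -/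
noncomputable def outflow (Ar : Event n → Event n → Prop)
    (x : Event n → Event n → ℝ) (v : Event n) : ℝ :=
  ∑ w : Event n, if Ar v w then x v w else 0

/-- Aggregated location variables `x̄_{ij} = Σ_{(v,w) ∈ A : v₁ = i, w₁ = j} x_{(v,w)}`. -/
noncomputable def xLocA (Ar : Event n → Event n → Prop)
    (x : Event n → Event n → ℝ) (i j : Loc n) : ℝ :=
  ∑ v : Event n, ∑ w : Event n, if Ar v w ∧ v.loc = i ∧ w.loc = j then x v w else 0

/-- Sum of `x` over all arcs satisfying a predicate. -/
noncomputable def arcSum (Ar : Event n → Event n → Prop)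
    (x : Event n → Event n → ℝ) (P : Event n → Event n → Prop) : ℝ :=
  ∑ v : Event n, ∑ w : Event n, if Ar v w ∧ P v w then x v w else 0

/-- Event-based routing costs `Σ_{a ∈ A} c_a x_a`. -/
noncomputable def objEB (Ar : Event n → Event n → Prop) (c : Loc n → Loc n → ℝ)
    (x : Event n → Event n → ℝ) : ℝ :=
  ∑ v : Event n, ∑ w : Event n, if Ar v w then c v.loc w.loc * x v w else 0

/-- Location-based routing costs `Σ_{i,j ∈ J} c̄_{ij} x̄_{ij}`. -/
noncomputable def objLoc (c : Loc n → Loc n → ℝ) (xb : Loc n → Loc n → ℝ) : ℝ :=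
  ∑ i : Loc n, ∑ j : Loc n, c i j * xb i j

/-- Total inflow into the pick-up events of request `i`:
`Σ_{v ∈ V_{i⁺}} Σ_{a ∈ δ^in(v)} x_a`. -/
noncomputable def pickupInflow (Q : ℕ) (q : Fin n → ℕ)
    (Ar : Event n → Event n → Prop) (x : Event n → Event n → ℝ) (i : Fin n) : ℝ :=
  ∑ v : Event n, if EventOK Q q v ∧ v.loc = Loc.pick i then inflow Ar x v else 0

/-- Total inflow into the delivery events of request `i`. -/
noncomputable def deliveryInflow (Q : ℕ) (q : Fin n → ℕ)
    (Ar : Event n → Event n → Prop) (x : Event n → Event n → ℝ) (i : Fin n) : ℝ :=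
  ∑ v : Event n, if EventOK Q q v ∧ v.loc = Loc.drop i then inflow Ar x v else 0

/-- The set of customers aboard when the vehicle leaves the event `v`. -/
def aboardAfter (v : Event n) : Finset (Fin n) :=
  match v.loc with
  | .depot => ∅
  | .pick i => insert i v.others
  | .drop _ => v.others

/-- The set of customers aboard when the vehicle arrives at the event `v`. -/
def aboardBefore (v : Event n) : Finset (Fin n) :=
  match v.loc with
  | .depot => ∅
  | .pick _ => v.others
  | .drop i => insert i v.others

theorem aboardAfter_eq_aboardBefore {v w : Event n} (h : ArcShape v w) :
    aboardAfter v = aboardBefore w := by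
  obtain ⟨lv, ov⟩ := v
  obtain ⟨lw, ow⟩ := w
  cases lv <;> cases lw <;> simp_all [ArcShape, aboardAfter, aboardBefore]

/-- Double counting of the flow on the arcs on which customer `i` is aboard. -/
theorem sum_outflow_aboardAfter (Q : ℕ) (q : Fin n → ℕ) (i : Fin n) (x : Event n → Event n → ℝ) :
    ∑ v, (if i ∈ aboardAfter v then outflow (Arc Q q) x v else 0) =
      ∑ v, (if i ∈ aboardBefore v then inflow (Arc Q q) x v else 0) := by
  calc ∑ v, (if i ∈ aboardAfter v then outflow (Arc Q q) x v else 0)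
      = ∑ v, ∑ w, (if i ∈ aboardAfter v then (if Arc Q q v w then x v w else 0) else 0) := by
        refine Finset.sum_congr rfl fun v _ => ?_
        split_ifs <;> simp [outflow]
    _ = ∑ v, ∑ w, (if i ∈ aboardBefore w then (if Arc Q q v w then x v w else 0) else 0) := by
        refine Finset.sum_congr rfl fun v _ => Finset.sum_congr rfl fun w _ => ?_
        by_cases h : Arc Q q v w
        · rw [aboardAfter_eq_aboardBefore h.2.2]
        · simp [h]
    _ = ∑ w, ∑ v, (if i ∈ aboardBefore w then (if Arc Q q v w then x v w else 0) else 0) :=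
        Finset.sum_comm
    _ = ∑ v, (if i ∈ aboardBefore v then inflow (Arc Q q) x v else 0) := by
        refine Finset.sum_congr rfl fun v _ => ?_
        split_ifs <;> simp [inflow]

/-- Balance at a single event: the membership of `i` changes exactly at its pick-up and its
delivery events. -/
theorem event_balance {Q : ℕ} {q : Fin n → ℕ} {v : Event n} (hv : EventOK Q q v) (i : Fin n)
    (f : ℝ) :
    (if i ∈ aboardAfter v then f else 0) + (if v.loc = Loc.drop i then f else 0) =
      (if i ∈ aboardBefore v then f else 0) + (if v.loc = Loc.pick i then f else 0) := by
  obtain ⟨l, o⟩ := v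
  have h := hv.2.2
  cases l with
  | depot => simp [aboardAfter, aboardBefore]
  | pick j =>
    by_cases hj : j = i
    · subst hj
      simp_all [aboardAfter, aboardBefore]
    · simp [aboardAfter, aboardBefore, hj, Ne.symm hj]
      -- Both sides agree up to the decidability instance of the membership.
      congr
  | drop j =>
    by_cases hj : j = i
    · subst hj
      simp_all [aboardAfter, aboardBefore]
    · simp [aboardAfter, aboardBefore, hj, Ne.symm hj]
      -- Both sides agree up to the decidability instance of the membership.
      congr

/-- **Flow-through lemma.** If `x : A → ℝ_{≥0}` satisfies flow conservation at
every event `v ∈ V ∖ V₀` and the pick-up constraint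
`Σ_{v ∈ V_{i⁺}} Σ_{a ∈ δ^in(v)} x_a = 1` for request `i`, then the total flow
entering the delivery events of request `i` also equals `1`:
`Σ_{v ∈ V_{i⁻}} Σ_{a ∈ δ^in(v)} x_a = 1`. -/
theorem flow_through_delivery
    (Q : ℕ) (q : Fin n → ℕ) (i : Fin n)
    (x : Event n → Event n → ℝ)
    (hsupp : ∀ v w, ¬ Arc Q q v w → x v w = 0)
    (hnonneg : ∀ v w, 0 ≤ x v w)
    (hflow : ∀ v : Event n, EventOK Q q v → v ≠ depotEvent n →
      inflow (Arc Q q) x v = outflow (Arc Q q) x v)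
    (hpick : pickupInflow Q q (Arc Q q) x i = 1) :
    deliveryInflow Q q (Arc Q q) x i = 1 := by
  have hbal : ∀ v : Event n,
      (if i ∈ aboardAfter v then outflow (Arc Q q) x v else 0) +
        (if EventOK Q q v ∧ v.loc = Loc.drop i then inflow (Arc Q q) x v else 0) =
      (if i ∈ aboardBefore v then inflow (Arc Q q) x v else 0) +
        (if EventOK Q q v ∧ v.loc = Loc.pick i then inflow (Arc Q q) x v else 0) := by
    intro v
    by_cases hv : EventOK Q q v
    · have hout : (if i ∈ aboardAfter v then outflow (Arc Q q) x v else 0) =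
          (if i ∈ aboardAfter v then inflow (Arc Q q) x v else 0) := by
        by_cases hd : v = depotEvent n
        · simp [hd, aboardAfter, depotEvent]
        · rw [hflow v hv hd]
      rw [hout]
      simpa only [hv, true_and] using event_balance hv i (inflow (Arc Q q) x v)
    -- No arc touches an invalid event, so both of its flows vanish.
    · have hin : inflow (Arc Q q) x v = 0 := by simp [inflow, Arc, hv]
      have hout : outflow (Arc Q q) x v = 0 := by simp [outflow, Arc, hv]
      simp [hin, hout]
  have hsum := Finset.sum_congr (rfl : (Finset.univ : Finset (Event n)) = _) fun v _ => hbal v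
  rw [Finset.sum_add_distrib, Finset.sum_add_distrib, sum_outflow_aboardAfter] at hsum
  rw [← hpick]
  exact add_left_cancel hsum
end

section
/- Redundancy of location-arc bounds. Let x : A → ℝ_{≥0} satisfy flow conservation Σ_{a∈δ^in(v)} x_a = Σ_{a∈δ^out(v)} x_a at every event v ∈ V∖V₀ and the pick-up constraints Σ_{v∈V_{i⁺}} Σ_{a∈δ^in(v)} x_a = 1 for all i ∈ R. Then for every location i ∈ J and every customer location j ∈ P ∪ D, 0 ≤ Σ_{(v,w)∈A: v₁=i, w₁=j} x_{(v,w)} ≤ 1. -/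
/-!
The aggregated variable `xLocA i j` is part of the total flow entering the events located at `j`,
so it suffices that this total is `1` for every customer location `j`.
For pick-ups this is a hypothesis. For the delivery of request `i`, let `f v` be `1` if customer `i`
is aboard on departure from `v`, and `0` otherwise. Along an arc `(v, w)` the difference `f w - f v`
is `1` if `w` is the pick-up of `i`, `-1` if `w` is the delivery of `i`, and `0` otherwise
(`aboardInd_sub`). By flow conservation, and since `f` vanishes at the depot, the sum of
`(f w - f v) * x v w` over all arcs is `0`; hence the delivery inflow of `i` equals its pick-up
inflow (`delivery_eq_pick`).
-/

open scoped Classical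
open Finset

variable {n : ℕ}

/-- The customers aboard when the vehicle departs from the event `v`: the customer just picked up
is included, the customer just delivered is not. -/
def Event.aboard (v : Event n) : Finset (Fin n) :=
  match v.loc with
  | .pick i => insert i v.others
  | _ => v.others

/-- Indicator of the events that customer `i` leaves aboard the vehicle. -/
noncomputable def aboardInd (i : Fin n) (v : Event n) : ℝ :=
  if i ∈ v.aboard then 1 else 0

lemma aboardInd_sub {Q : ℕ} {q : Fin n → ℕ} {v w : Event n} (h : Arc Q q v w) (i : Fin n) :
    aboardInd i w - aboardInd i v =
      (if w.loc = Loc.pick i then 1 else 0) - (if w.loc = Loc.drop i then 1 else 0) := by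
  obtain ⟨⟨-, -, hv⟩, ⟨-, -, hw⟩, hs⟩ := h
  obtain ⟨lv, ov⟩ := v
  obtain ⟨lw, ow⟩ := w
  have key : ∀ s t : Finset (Fin n), s = t → (i ∈ s ↔ i ∈ t) := by rintro s _ rfl; rfl
  cases lv <;> cases lw <;> simp only [ArcShape] at hs hv hw <;>
    simp only [aboardInd, Event.aboard, Loc.pick.injEq, Loc.drop.injEq, reduceCtorEq] <;>
    first
    | exact hs.elim
    | (replace hs := key _ _ hs; grind)
    | grind

/-- The total of `x` over all pairs of events whose head is located at `j`. -/
noncomputable def locInflow (x : Event n → Event n → ℝ) (j : Loc n) : ℝ :=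
  ∑ w : Event n, ∑ v : Event n, if w.loc = j then x v w else 0

section

variable {Q : ℕ} {q : Fin n → ℕ} {x : Event n → Event n → ℝ}

lemma inflow_eq (hsupp : ∀ v w, ¬ Arc Q q v w → x v w = 0) (v : Event n) :
    inflow (Arc Q q) x v = ∑ w, x w v := by
  refine Finset.sum_congr rfl fun w _ => ?_
  split_ifs with h
  · rfl
  · exact (hsupp _ _ h).symm

lemma outflow_eq (hsupp : ∀ v w, ¬ Arc Q q v w → x v w = 0) (v : Event n) :
    outflow (Arc Q q) x v = ∑ w, x v w := by
  refine Finset.sum_congr rfl fun w _ => ?_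
  split_ifs with h
  · rfl
  · exact (hsupp _ _ h).symm

lemma pickupInflow_eq (hsupp : ∀ v w, ¬ Arc Q q v w → x v w = 0) (i : Fin n) :
    pickupInflow Q q (Arc Q q) x i = locInflow x (Loc.pick i) := by
  refine Finset.sum_congr rfl fun v _ => ?_
  rw [inflow_eq hsupp]
  by_cases hl : v.loc = Loc.pick i
  · by_cases hv : EventOK Q q v
    · simp [hl, hv]
    · have h0 : ∀ w, x w v = 0 := fun w => hsupp _ _ fun h => hv h.2.1
      simp [h0]
  · simp [hl]

/-- Weighted flow conservation, for weights that vanish at the depot event. -/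
lemma sum_weight_eq (hsupp : ∀ v w, ¬ Arc Q q v w → x v w = 0)
    (hflow : ∀ v : Event n, EventOK Q q v → v ≠ depotEvent n →
      inflow (Arc Q q) x v = outflow (Arc Q q) x v)
    (f : Event n → ℝ) (hf : f (depotEvent n) = 0) :
    ∑ w, ∑ v, (f w - f v) * x v w = 0 := by
  have h : ∀ u, f u * ∑ v, x v u = f u * ∑ w, x u w := by
    intro u
    by_cases hu : EventOK Q q u
    · by_cases hd : u = depotEvent n
      · simp [hd, hf]
      · rw [← inflow_eq hsupp, ← outflow_eq hsupp, hflow u hu hd]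
    · -- An invalid event is not an endpoint of any arc.
      have h1 : ∀ w, x w u = 0 := fun w => hsupp _ _ fun h => hu h.2.1
      have h2 : ∀ w, x u w = 0 := fun w => hsupp _ _ fun h => hu h.1
      simp [h1, h2]
  simp only [sub_mul, Finset.sum_sub_distrib]
  rw [Finset.sum_comm (f := fun w v => f v * x v w)]
  simp only [← Finset.mul_sum]
  exact sub_eq_zero.2 (Finset.sum_congr rfl fun u _ => h u)

lemma delivery_eq_pick (hsupp : ∀ v w, ¬ Arc Q q v w → x v w = 0)
    (hflow : ∀ v : Event n, EventOK Q q v → v ≠ depotEvent n →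
      inflow (Arc Q q) x v = outflow (Arc Q q) x v) (i : Fin n) :
    locInflow x (Loc.drop i) = locInflow x (Loc.pick i) := by
  have h := sum_weight_eq hsupp hflow (aboardInd i)
    (by simp [aboardInd, Event.aboard, depotEvent])
  have e : ∀ w v, (aboardInd i w - aboardInd i v) * x v w =
      (if w.loc = Loc.pick i then x v w else 0) - (if w.loc = Loc.drop i then x v w else 0) := by
    intro w v
    by_cases ha : Arc Q q v w
    · rw [aboardInd_sub ha, sub_mul, ite_mul, ite_mul, one_mul, zero_mul]
    · simp [hsupp _ _ ha]
  simp only [e, Finset.sum_sub_distrib] at h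
  exact (sub_eq_zero.1 h).symm

lemma xLocA_le (hnonneg : ∀ v w, 0 ≤ x v w) (i j : Loc n) :
    xLocA (Arc Q q) x i j ≤ locInflow x j := by
  unfold xLocA locInflow
  rw [Finset.sum_comm]
  refine Finset.sum_le_sum fun w _ => Finset.sum_le_sum fun v _ => ?_
  have := hnonneg v w
  split_ifs <;> first | exact le_rfl | assumption | tauto

end

/-- **Redundancy of the location-arc bounds.** If `x : A → ℝ_{≥0}` satisfies
flow conservation at every event `v ∈ V ∖ V₀` and the pick-up constraints
`Σ_{v ∈ V_{i⁺}} Σ_{a ∈ δ^in(v)} x_a = 1` for all requests `i`, then for every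
location `i ∈ J` and every customer location `j ∈ P ∪ D` the aggregated
location variable satisfies `0 ≤ Σ_{(v,w) ∈ A : v₁=i, w₁=j} x_{(v,w)} ≤ 1`. -/
theorem xLoc_bounds_redundant
    (Q : ℕ) (q : Fin n → ℕ)
    (x : Event n → Event n → ℝ)
    (hsupp : ∀ v w, ¬ Arc Q q v w → x v w = 0)
    (hnonneg : ∀ v w, 0 ≤ x v w)
    (hflow : ∀ v : Event n, EventOK Q q v → v ≠ depotEvent n →
      inflow (Arc Q q) x v = outflow (Arc Q q) x v)
    (hpick : ∀ i : Fin n, pickupInflow Q q (Arc Q q) x i = 1) :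
    ∀ i j : Loc n, j ≠ Loc.depot →
      0 ≤ xLocA (Arc Q q) x i j ∧ xLocA (Arc Q q) x i j ≤ 1 := by
  intro i j hj
  refine ⟨Finset.sum_nonneg fun v _ => Finset.sum_nonneg fun w _ => ?_, ?_⟩
  · split_ifs
    · exact hnonneg v w
    · exact le_rfl
  · refine (xLocA_le hnonneg i j).trans_eq ?_
    cases j with
    | depot => exact absurd rfl hj
    | pick k => rw [← pickupInflow_eq hsupp, hpick]
    | drop k => rw [delivery_eq_pick hsupp hflow, ← pickupInflow_eq hsupp, hpick]
end

section
/- Subtour/pairing constraints are implied by the event-based relaxation. Let (x, B̄) be feasible for the LP relaxation of the LAEB formulation and define x̄_{ij} = Σ_{(v,w)∈A: v₁=i, w₁=j} x_{(v,w)} for i,j ∈ J (with x̄_{0⁺j} = x̄_{0j} and x̄_{i0⁻} = x̄_{i0}). Then x̄ satisfies all pairing-and-precedence (subtour-elimination) constraints of the LB formulation: Σ_{i,j∈S} x̄_{ij} ≤ |S| − 2 for every S ∈ 𝒮 = {S ⊆ J̄ : 0⁺ ∈ S, 0⁻ ∉ S, ∃i ∈ R with i⁺ ∉ S and i⁻ ∈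 S}, where J̄ = P ∪ D ∪ {0⁺,0⁻}. -/
/-!
Write `T` for the locations of `S` other than the depot. Nothing enters `0⁺`, so the sum in question
is the aggregated flow from `S` into `T`. Every pick-up and every delivery location has inflow
exactly one, so the total flow into `T` is `|T| = |S| - 1`, and it remains to see that at least one
unit of flow enters `T` from outside `S`.

Both facts come from flow conservation over sets of events (`arcSum_cut`). Along an arc `(v, w)` the
customers aboard after `v` are those aboard before `w` (`Arc.after_eq_before`), so the set of events
that request `i` leaves aboard can be entered only at `i⁺` and left only at `i⁻`; this gives inflow
one at `i⁻` (`arcSum_drop`). If `i⁺ ∉ S` and `i⁻ ∈ S`, cut instead around the events with `i` aboard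
whose location is outside `S`. The unit of flow through `i⁺` enters this set, and an arc leaving it
ends either at `i⁻` or at an event with `i` aboard and location in `S`, hence in `T` in both cases
(`one_le_crossing`).
-/

open scoped Classical
open Finset

variable {n : ℕ}

/-- Feasibility for the LP relaxation of the LAEB formulation with respect to
an arc relation `Ar` on the event-based graph. -/
structure LAEB_LP (Q K : ℕ) (q : Fin n → ℕ) (s L : Fin n → ℝ)
    (t : Loc n → Loc n → ℝ) (e l : Loc n → ℝ)
    (Ar : Event n → Event n → Prop)
    (x : Event n → Event n → ℝ) (Bb : Loc n → ℝ) : Prop where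
  support : ∀ v w, ¬ Ar v w → x v w = 0
  nonneg : ∀ v w, 0 ≤ x v w
  le_one : ∀ v w, x v w ≤ 1
  flow : ∀ v : Event n, EventOK Q q v → inflow Ar x v = outflow Ar x v
  pickup : ∀ i : Fin n, pickupInflow Q q Ar x i = 1
  fleet : outflow Ar x (depotEvent n) ≤ (K : ℝ)
  time : ∀ i j : Loc n,
    Bb j ≥ Bb i + sLoc s i + t i j
      - (l i + sLoc s i + t i j - e j) * (1 - xLocA Ar x i j)
  windows : ∀ j : Loc n, e j ≤ Bb j ∧ Bb j ≤ l j
  ride : ∀ i : Fin n, Bb (Loc.drop i) - Bb (Loc.pick i) - s i ≤ L i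

/-- Feasibility for the (integer) LAEB formulation: LP feasibility together
with the binary constraints `x_a ∈ {0,1}`. -/
def LAEB_Int (Q K : ℕ) (q : Fin n → ℕ) (s L : Fin n → ℝ)
    (t : Loc n → Loc n → ℝ) (e l : Loc n → ℝ)
    (Ar : Event n → Event n → Prop)
    (x : Event n → Event n → ℝ) (Bb : Loc n → ℝ) : Prop :=
  LAEB_LP Q K q s L t e l Ar x Bb ∧ ∀ v w, x v w = 0 ∨ x v w = 1

/-- Locations of the LB formulation of Ropke, Cordeau and Laporte (2007):
`J̄ = P ∪ D ∪ {0⁺, 0⁻}` with two copies of the depot. -/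
inductive LocB (n : ℕ) : Type
  | start : LocB n   -- the start depot `0⁺`
  | finish : LocB n  -- the end depot `0⁻`
  | pick : Fin n → LocB n
  | drop : Fin n → LocB n
  deriving DecidableEq, Fintype

/-- Both depot copies carry the depot's data. -/
def LocB.toLoc : LocB n → Loc n
  | .start => Loc.depot
  | .finish => Loc.depot
  | .pick i => Loc.pick i
  | .drop i => Loc.drop i

/-- `𝕀_j = 1` if `j ∈ P` and `−1` otherwise. -/
def indLB : LocB n → ℝ
  | .pick _ => 1
  | _ => -1

/-- Loads attached to the locations of `J̄` (`q_{0⁺} = q_{0⁻} = 0`). -/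
def qLB (q : Fin n → ℕ) : LocB n → ℝ
  | .start => 0
  | .finish => 0
  | .pick i => (q i : ℝ)
  | .drop i => (q i : ℝ)

/-- Feasibility for the LP relaxation of the LB formulation of
Ropke, Cordeau and Laporte (2007). -/
structure LB_LP (Q K : ℕ) (q : Fin n → ℕ) (s L : Fin n → ℝ)
    (t : Loc n → Loc n → ℝ) (e l : Loc n → ℝ)
    (xb : LocB n → LocB n → ℝ) (Bb : LocB n → ℝ) (Ql : LocB n → ℝ) : Prop where
  nonneg : ∀ i j : LocB n, 0 ≤ xb i j
  le_one : ∀ i j : LocB n, xb i j ≤ 1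
  degIn : ∀ j : LocB n, (∃ i : Fin n, j = LocB.pick i ∨ j = LocB.drop i) →
      (∑ i : LocB n, xb i j) = 1
  degOut : ∀ i : LocB n, (∃ i' : Fin n, i = LocB.pick i' ∨ i = LocB.drop i') →
      (∑ j : LocB n, xb i j) = 1
  fleet : (∑ j : Fin n, xb LocB.start (LocB.pick j)) ≤ (K : ℝ)
  subtour : ∀ S : Finset (LocB n), LocB.start ∈ S → LocB.finish ∉ S →
      (∃ i : Fin n, LocB.pick i ∉ S ∧ LocB.drop i ∈ S) →
      (∑ i ∈ S, ∑ j ∈ S, xb i j) ≤ (S.card : ℝ) - 2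
  time : ∀ i j : LocB n,
      Bb j ≥ Bb i + sLoc s i.toLoc + t i.toLoc j.toLoc
        - (l i.toLoc + sLoc s i.toLoc + t i.toLoc j.toLoc - e j.toLoc) * (1 - xb i j)
  load : ∀ i j : LocB n,
      Ql j ≥ Ql i + indLB j * qLB q j - (Q : ℝ) * (1 - xb i j)
  windows : ∀ j : LocB n, e j.toLoc ≤ Bb j ∧ Bb j ≤ l j.toLoc
  loadBounds : ∀ j : LocB n,
      max 0 (indLB j * qLB q j) ≤ Ql j ∧
      Ql j ≤ min (Q : ℝ) ((Q : ℝ) + indLB j * qLB q j)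
  ride : ∀ i : Fin n, Bb (LocB.drop i) - Bb (LocB.pick i) - s i ≤ L i

/-- LB routing costs `Σ_{i,j ∈ J̄} c̄_{ij} x̄_{ij}`. -/
noncomputable def objLB (c : Loc n → Loc n → ℝ) (xb : LocB n → LocB n → ℝ) : ℝ :=
  ∑ i : LocB n, ∑ j : LocB n, c i.toLoc j.toLoc * xb i j

/-- Extension of aggregated location variables to `J̄`:
`x̄_{0⁺ j} = x̄_{0 j}`, `x̄_{i 0⁻} = x̄_{i 0}`, no arcs into `0⁺` or out of `0⁻`. -/
noncomputable def xbOf (xl : Loc n → Loc n → ℝ) : LocB n → LocB n → ℝ := fun i j =>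
  match i, j with
  | .start, .finish => 0
  | .finish, _ => 0
  | _, .start => 0
  | i, j => xl i.toLoc j.toLoc

/-- The load term `Σ_{(u,v) ∈ A : v₁ = j} x_{(u,v)} · Σ_{l=2}^{Q} q_{v_l}`. -/
noncomputable def loadTerm (Q : ℕ) (q : Fin n → ℕ)
    (x : Event n → Event n → ℝ) (j : Loc n) : ℝ :=
  ∑ u : Event n, ∑ v : Event n,
    if Arc Q q u v ∧ v.loc = j then x u v * (∑ m ∈ v.others, (q m : ℝ)) else 0

/-- The derived load variables: `Q_{0⁺} = Q_{0⁻} = 0` and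
`Q_j = 𝕀⁺_j q_j + Σ_{(u,v) ∈ A : v₁ = j} x_{(u,v)} Σ_{l=2}^{Q} q_{v_l}`. -/
noncomputable def QlOf (Q : ℕ) (q : Fin n → ℕ)
    (x : Event n → Event n → ℝ) : LocB n → ℝ := fun j =>
  match j with
  | .start => 0
  | .finish => 0
  | .pick i => (q i : ℝ) + loadTerm Q q x (Loc.pick i)
  | .drop i => loadTerm Q q x (Loc.drop i)

/-- The customers aboard when the vehicle leaves the location of `v`. -/
noncomputable def Event.after (v : Event n) : Finset (Fin n) :=
  match v.loc with
  | .depot => ∅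
  | .pick i => insert i v.others
  | .drop _ => v.others

/-- The customers aboard when the vehicle arrives at the location of `v`. -/
noncomputable def Event.before (v : Event n) : Finset (Fin n) :=
  match v.loc with
  | .depot => ∅
  | .pick _ => v.others
  | .drop i => insert i v.others

lemma Arc.after_eq_before {Q : ℕ} {q : Fin n → ℕ} {v w : Event n} (h : Arc Q q v w) :
    v.after = w.before := by
  obtain ⟨hv, hw, hs⟩ := h
  rcases v with ⟨_ | _ | _, v⟩ <;> rcases w with ⟨_ | _ | _, w⟩ <;>
    simp_all [ArcShape, EventOK, Event.after, Event.before]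

lemma Event.not_mem_before_pick {Q : ℕ} {q : Fin n → ℕ} {v : Event n} {i : Fin n}
    (hv : EventOK Q q v) (h : v.loc = .pick i) : i ∉ v.before ∧ i ∈ v.after := by
  rcases v with ⟨_ | _ | _, v⟩ <;> simp_all [EventOK, Event.after, Event.before]

lemma Event.mem_before_drop {Q : ℕ} {q : Fin n → ℕ} {v : Event n} {i : Fin n}
    (hv : EventOK Q q v) (h : v.loc = .drop i) : i ∈ v.before ∧ i ∉ v.after := by
  rcases v with ⟨_ | _ | _, v⟩ <;> simp_all [EventOK, Event.after, Event.before]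

lemma Event.loc_eq_pick {v : Event n} {i : Fin n}
    (hb : i ∉ v.before) (ha : i ∈ v.after) : v.loc = .pick i := by
  rcases v with ⟨_ | _ | _, v⟩ <;> simp_all [Event.after, Event.before]

lemma Event.loc_eq_drop {v : Event n} {i : Fin n}
    (hb : i ∈ v.before) (ha : i ∉ v.after) : v.loc = .drop i := by
  rcases v with ⟨_ | _ | _, v⟩ <;> simp_all [Event.after, Event.before]

lemma Event.loc_ne_depot {v : Event n} {i : Fin n} (hb : i ∈ v.before) : v.loc ≠ .depot := by
  rcases v with ⟨_ | _ | _, v⟩ <;> simp_all [Event.before]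

section arcSums

variable {Ar : Event n → Event n → Prop} {x : Event n → Event n → ℝ}

lemma arcSum_mono (hx : ∀ v w, 0 ≤ x v w) {P P' : Event n → Event n → Prop}
    (h : ∀ v w, Ar v w → P v w → P' v w) : arcSum Ar x P ≤ arcSum Ar x P' := by
  unfold arcSum
  refine sum_le_sum fun v _ => sum_le_sum fun w _ => ?_
  have := hx v w
  have := h v w
  split_ifs <;> first | linarith | tauto

lemma arcSum_congr {P P' : Event n → Event n → Prop}
    (h : ∀ v w, Ar v w → (P v w ↔ P' v w)) : arcSum Ar x P = arcSum Ar x P' := by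
  unfold arcSum
  refine sum_congr rfl fun v _ => sum_congr rfl fun w _ => ?_
  have := h v w
  split_ifs <;> first | rfl | tauto

lemma arcSum_split (P R : Event n → Event n → Prop) :
    arcSum Ar x P
      = arcSum Ar x (fun v w => R v w ∧ P v w) + arcSum Ar x (fun v w => ¬ R v w ∧ P v w) := by
  unfold arcSum
  simp only [← sum_add_distrib]
  refine sum_congr rfl fun v _ => sum_congr rfl fun w _ => ?_
  by_cases h : Ar v w <;> by_cases hR : R v w <;> simp [h, hR]

/-- Flow conservation over a set `U` of events: as much flow leaves `U` as enters it. -/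
lemma arcSum_cut (U : Event n → Prop) (hU : ∀ v, U v → inflow Ar x v = outflow Ar x v) :
    arcSum Ar x (fun v w => U v ∧ ¬ U w) = arcSum Ar x (fun v w => ¬ U v ∧ U w) := by
  have hout : arcSum Ar x (fun v _ => U v) = ∑ v, if U v then outflow Ar x v else 0 := by
    unfold arcSum outflow
    refine sum_congr rfl fun v _ => ?_
    by_cases h : U v <;> simp [h]
  have hin : arcSum Ar x (fun _ w => U w) = ∑ v, if U v then inflow Ar x v else 0 := by
    unfold arcSum inflow
    rw [sum_comm]
    refine sum_congr rfl fun v _ => ?_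
    by_cases h : U v <;> simp [h]
  have heq : arcSum Ar x (fun v _ => U v) = arcSum Ar x (fun _ w => U w) := by
    rw [hout, hin]
    refine sum_congr rfl fun v _ => ?_
    split_ifs with h
    · exact (hU v h).symm
    · rfl
  rw [arcSum_split (fun v _ => U v) (fun _ w => U w),
    arcSum_split (fun _ w => U w) (fun v _ => U v)] at heq
  have h1 : arcSum Ar x (fun v w => U w ∧ U v) = arcSum Ar x (fun v w => U v ∧ U w) :=
    arcSum_congr fun _ _ _ => and_comm
  have h2 : arcSum Ar x (fun v w => ¬ U w ∧ U v) = arcSum Ar x (fun v w => U v ∧ ¬ U w) :=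
    arcSum_congr fun _ _ _ => and_comm
  linarith

lemma arcSum_head_mem (P : Event n → Event n → Prop) (B : Finset (Loc n)) :
    arcSum Ar x (fun v w => P v w ∧ w.loc ∈ B)
      = ∑ b ∈ B, arcSum Ar x (fun v w => P v w ∧ w.loc = b) := by
  unfold arcSum
  symm
  rw [sum_comm]
  refine sum_congr rfl fun v _ => ?_
  rw [sum_comm]
  refine sum_congr rfl fun w _ => ?_
  by_cases h : Ar v w ∧ P v w
  · simp [h]
  · have h' : ∀ c : Prop, ¬ (Ar v w ∧ P v w ∧ c) := by tauto
    simp [h']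

lemma arcSum_tail_mem (P : Event n → Event n → Prop) (A : Finset (Loc n)) :
    arcSum Ar x (fun v w => v.loc ∈ A ∧ P v w)
      = ∑ a ∈ A, arcSum Ar x (fun v w => v.loc = a ∧ P v w) := by
  unfold arcSum
  symm
  rw [sum_comm]
  refine sum_congr rfl fun v _ => ?_
  rw [sum_comm]
  refine sum_congr rfl fun w _ => ?_
  by_cases h : Ar v w ∧ P v w
  · simp [h]
  · have h' : ∀ c : Prop, ¬ (Ar v w ∧ c ∧ P v w) := by tauto
    simp [h']

end arcSums

lemma arcSum_pick {Q : ℕ} {q : Fin n → ℕ} {x : Event n → Event n → ℝ} {i : Fin n}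
    (hp : pickupInflow Q q (Arc Q q) x i = 1) :
    arcSum (Arc Q q) x (fun _ w => w.loc = .pick i) = 1 := by
  rw [← hp]
  unfold arcSum pickupInflow inflow
  rw [sum_comm]
  refine sum_congr rfl fun v _ => ?_
  split_ifs with h
  · simp [h.2]
  · refine sum_eq_zero fun w _ => if_neg ?_
    rintro ⟨ha, hl⟩
    exact h ⟨ha.2.1, hl⟩

/-- Deliveries inherit unit inflow from pick-ups: the events that request `i` leaves aboard are
entered exactly at `i⁺` and left exactly at `i⁻`. -/
lemma arcSum_drop {Q : ℕ} {q : Fin n → ℕ} {x : Event n → Event n → ℝ} {i : Fin n}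
    (hf : ∀ v : Event n, EventOK Q q v → inflow (Arc Q q) x v = outflow (Arc Q q) x v)
    (hp : pickupInflow Q q (Arc Q q) x i = 1) :
    arcSum (Arc Q q) x (fun _ w => w.loc = .drop i) = 1 := by
  have hc := arcSum_cut (Ar := Arc Q q) (x := x)
    (fun v => EventOK Q q v ∧ i ∈ v.after) (fun v hv => hf v hv.1)
  rw [← arcSum_pick hp]
  refine Eq.trans ?_ (hc.trans ?_)
  · refine arcSum_congr fun v w ha => ?_
    rw [ha.after_eq_before]
    refine ⟨fun h => ?_, fun h => ?_⟩
    · have := Event.mem_before_drop ha.2.1 h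
      exact ⟨⟨ha.1, this.1⟩, fun h' => this.2 h'.2⟩
    · exact Event.loc_eq_drop h.1.2 fun h' => h.2 ⟨ha.2.1, h'⟩
  · refine arcSum_congr fun v w ha => ?_
    rw [ha.after_eq_before]
    refine ⟨fun h => ?_, fun h => ?_⟩
    · exact Event.loc_eq_pick (fun h' => h.1 ⟨ha.1, h'⟩) h.2.2
    · have := Event.not_mem_before_pick ha.2.1 h
      exact ⟨fun h' => this.1 h'.2, ha.2.1, this.2⟩

/-- The ride of request `i` carries a unit of flow from `i⁺` outside `A` to `i⁻` inside `A`, and it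
avoids the depot. -/
lemma one_le_crossing {Q : ℕ} {q : Fin n → ℕ} {x : Event n → Event n → ℝ} {i : Fin n}
    (hx : ∀ v w, 0 ≤ x v w)
    (hf : ∀ v : Event n, EventOK Q q v → inflow (Arc Q q) x v = outflow (Arc Q q) x v)
    (hp : pickupInflow Q q (Arc Q q) x i = 1) (A : Finset (Loc n))
    (hpA : Loc.pick i ∉ A) (hdA : Loc.drop i ∈ A) :
    1 ≤ arcSum (Arc Q q) x (fun v w => ¬ v.loc ∈ A ∧ w.loc ∈ A.erase .depot) := by
  have hc := arcSum_cut (Ar := Arc Q q) (x := x)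
    (fun v => EventOK Q q v ∧ i ∈ v.after ∧ v.loc ∉ A) (fun v hv => hf v hv.1)
  rw [← arcSum_pick hp]
  refine le_trans (arcSum_mono hx fun v w ha h => ?_) (hc.symm.le.trans (arcSum_mono hx ?_))
  · have := Event.not_mem_before_pick ha.2.1 h
    refine ⟨fun h' => this.1 (ha.after_eq_before ▸ h'.2.1), ha.2.1, this.2, ?_⟩
    rw [h]
    exact hpA
  · rintro v w ha ⟨⟨-, hv, hvA⟩, hw⟩
    rw [ha.after_eq_before] at hv
    refine ⟨hvA, mem_erase.2 ⟨Event.loc_ne_depot hv, ?_⟩⟩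
    by_cases hi : i ∈ w.after
    · by_contra hwA
      exact hw ⟨ha.2.1, hi, hwA⟩
    · rw [Event.loc_eq_drop hv hi]
      exact hdA

/-- On a set without `0⁻` the two depot copies need not be distinguished; only the arcs into the
depot are lost. -/
lemma sum_xbOf (xl : Loc n → Loc n → ℝ) (S : Finset (LocB n)) (hfin : LocB.finish ∉ S) :
    (∑ i ∈ S, ∑ j ∈ S, xbOf xl i j)
      = ∑ a ∈ S.image LocB.toLoc, ∑ b ∈ (S.image LocB.toLoc).erase .depot, xl a b := by
  have hinj : Set.InjOn LocB.toLoc (S : Set (LocB n)) := by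
    intro a ha b hb h
    cases a <;> cases b <;> simp_all [LocB.toLoc]
  have herase : ∀ f : Loc n → ℝ, ∑ b ∈ (S.image LocB.toLoc).erase .depot, f b
      = ∑ b ∈ S.image LocB.toLoc, if b = .depot then 0 else f b := by
    intro f
    rw [← filter_ne', sum_filter]
    exact sum_congr rfl fun b _ => by by_cases h : b = .depot <;> simp [h]
  rw [sum_image hinj]
  refine sum_congr rfl fun i hi => ?_
  rw [herase, sum_image hinj]
  refine sum_congr rfl fun j hj => ?_
  cases i <;> cases j <;> simp_all [xbOf, LocB.toLoc]

/-- **Subtour/pairing constraints are implied by the event-based relaxation.**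
Let `(x, B̄)` be feasible for the LP relaxation of the LAEB formulation and
define `x̄_{ij} = Σ_{(v,w) ∈ A : v₁=i, w₁=j} x_{(v,w)}` (with
`x̄_{0⁺j} = x̄_{0j}` and `x̄_{i0⁻} = x̄_{i0}`).  Then `x̄` satisfies all
pairing-and-precedence (subtour-elimination) constraints of the LB
formulation: `Σ_{i,j ∈ S} x̄_{ij} ≤ |S| − 2` for every `S ∈ 𝒮`. -/
theorem subtour_constraints_implied
    (Q K : ℕ) (q : Fin n → ℕ) (s L : Fin n → ℝ)
    (t : Loc n → Loc n → ℝ) (e l : Loc n → ℝ)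
    (x : Event n → Event n → ℝ) (Bb : Loc n → ℝ)
    (hfeas : LAEB_LP Q K q s L t e l (Arc Q q) x Bb) :
    ∀ S : Finset (LocB n), LocB.start ∈ S → LocB.finish ∉ S →
      (∃ i : Fin n, LocB.pick i ∉ S ∧ LocB.drop i ∈ S) →
      (∑ i ∈ S, ∑ j ∈ S, xbOf (xLocA (Arc Q q) x) i j) ≤ (S.card : ℝ) - 2 := by
  rintro S hst hfin ⟨i, hpS, hdS⟩
  have hmem : ∀ b : LocB n, b ≠ .start → b ≠ .finish →
      (b.toLoc ∈ S.image LocB.toLoc ↔ b ∈ S) := by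
    intro b hb hb'
    rw [mem_image]
    refine ⟨?_, fun h => ⟨b, h, rfl⟩⟩
    rintro ⟨c, hc, h⟩
    cases b <;> cases c <;> simp_all [LocB.toLoc]
  have hcard : (S.image LocB.toLoc).card = S.card := by
    refine card_image_of_injOn ?_
    intro a ha b hb h
    cases a <;> cases b <;> simp_all [LocB.toLoc]
  rw [sum_xbOf _ S hfin, ← hcard]
  have hdep : Loc.depot ∈ S.image LocB.toLoc := mem_image.2 ⟨_, hst, rfl⟩
  have hpA : Loc.pick i ∉ S.image LocB.toLoc := fun h =>
    hpS ((hmem (.pick i) (by simp) (by simp)).1 h)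
  have hdA : Loc.drop i ∈ S.image LocB.toLoc := mem_image.2 ⟨_, hdS, rfl⟩
  generalize S.image LocB.toLoc = A at hdep hpA hdA
  have hcross := one_le_crossing hfeas.nonneg hfeas.flow (hfeas.pickup i) A hpA hdA
  have hinside : (∑ a ∈ A, ∑ b ∈ A.erase .depot, xLocA (Arc Q q) x a b)
      = arcSum (Arc Q q) x (fun v w => v.loc ∈ A ∧ w.loc ∈ A.erase .depot) := by
    rw [arcSum_tail_mem (fun _ w => w.loc ∈ A.erase .depot)]
    refine sum_congr rfl fun a _ => ?_
    rw [arcSum_head_mem (fun v _ => v.loc = a)]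
    refine sum_congr rfl fun b _ => ?_
    -- the two sides differ only in their decidability instances
    unfold xLocA arcSum
    congr!
  have htotal : arcSum (Arc Q q) x (fun _ w => w.loc ∈ A.erase .depot) = (A.card : ℝ) - 1 := by
    have h := arcSum_head_mem (Ar := Arc Q q) (x := x) (fun _ _ => True) (A.erase .depot)
    simp only [true_and] at h
    rw [h, sum_congr rfl (g := fun _ => (1 : ℝ)), sum_const, nsmul_eq_mul, mul_one,
      cast_card_erase_of_mem hdep]
    intro b hb
    rcases b with _ | j | j
    · simp at hb
    · exact arcSum_pick (hfeas.pickup j)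
    · exact arcSum_drop hfeas.flow (hfeas.pickup j)
  rw [arcSum_split _ (fun v _ => v.loc ∈ A)] at htotal
  linarith
end

section
/- Capacity constraints are implied by the event-based relaxation. Let (x, B̄) be feasible for the LP relaxation of the LAEB formulation, set x̄_{ij} = Σ_{(v,w)∈A: v₁=i, w₁=j} x_{(v,w)} (with x̄_{0⁺j} = x̄_{0j} and x̄_{i0⁻} = x̄_{i0}), Q_{0⁺} = Q_{0⁻} = 0, and Q_j = 𝕀⁺_j q_j + Σ_{(u,v)∈A: v₁=j} x_{(u,v)} Σ_{l=2}^{Q} q_{v_l} for j ∈ P ∪ D, where 𝕀⁺_j = 1 if j ∈ P and 0 otherwise. Then the load constraints of the LB formulation hold: Q_j ≥ Q_i + 𝕀_j q_j − Q(1 − x̄_{ij}) for all i,j ∈ J̄ = P ∪ D ∪ {0⁺,0⁻}, and max{0, 𝕀_j q_j} ≤ Q_j ≤ min{Q, Q + 𝕀_j q_j} for all j ∈ J̄, where 𝕀_j = 1 if j ∈ P and 𝕀_j = −1 otherwise. -/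
/-!
Every arc `(v, w)` of the event-based graph preserves the set of customers aboard: the set on
leaving `v` (`aft v`) is the set on arriving at `w` (`bef w`), see `ArcShape.aft_eq_bef`. Combined
with flow conservation, this shows that the `x`-weighted totals of any function of `aft` and of
`bef` agree (`sum_aft_eq_sum_bef`). Applied to the indicator of `i ∈ ·`, it shows that the delivery
events of `i` receive as much flow as the pick-up events of `i`, namely one unit. The flow through
a location `j ≠ 0` is therefore a convex combination of events at `j`, and `Q_j` is the average
load on leaving `j`, while `Q_j - 𝕀_j q_j` is the average load on arriving at `j`. Both
averages lie in `[0, Q]`, which is the statement on load bounds.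

For the linking inequality, the flow leaving `i` splits into the part going to `j`, whose load is
also counted in the average load on arriving at `j`, and the rest, of total flow `1 - x̄_{ij}`,
whose load is at most `Q` per unit (`avgAft_le`).
-/

open scoped Classical
open Finset

variable {n : ℕ}

/-! ### Customers aboard and average loads -/

/-- The customers aboard when the vehicle leaves an event. -/
def Event.aft (v : Event n) : Finset (Fin n) :=
  match v.loc with
  | .depot => ∅
  | .pick i => insert i v.others
  | .drop _ => v.others

/-- The customers aboard when the vehicle arrives at an event. -/
def Event.bef (v : Event n) : Finset (Fin n) :=
  match v.loc with
  | .depot => ∅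
  | .pick _ => v.others
  | .drop i => insert i v.others

/-- Total load of a set of customers. -/
def wt (q : Fin n → ℕ) (S : Finset (Fin n)) : ℝ := ∑ m ∈ S, (q m : ℝ)

/-- Total `x`-flow entering an event. The sum runs over all events, which is the same as
`inflow` as soon as `x` is supported on the arcs. -/
def flowIn (x : Event n → Event n → ℝ) (v : Event n) : ℝ := ∑ u, x u v

/-- Total flow through a location. -/
noncomputable def mass (x : Event n → Event n → ℝ) (j : Loc n) : ℝ :=
  ∑ v : Event n, if v.loc = j then flowIn x v else 0

/-- Flow-weighted load on leaving location `j`. -/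
noncomputable def avgAft (q : Fin n → ℕ) (x : Event n → Event n → ℝ) (j : Loc n) : ℝ :=
  ∑ v : Event n, if v.loc = j then flowIn x v * wt q v.aft else 0

/-- Flow-weighted load on arriving at location `j`. -/
noncomputable def avgBef (q : Fin n → ℕ) (x : Event n → Event n → ℝ) (j : Loc n) : ℝ :=
  ∑ v : Event n, if v.loc = j then flowIn x v * wt q v.bef else 0

lemma ArcShape.aft_eq_bef {v w : Event n} (h : ArcShape v w) : v.aft = w.bef := by
  obtain ⟨lv, ov⟩ := v
  obtain ⟨lw, ow⟩ := w
  cases lv <;> cases lw <;> simp_all [ArcShape, Event.aft, Event.bef]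

lemma wt_nonneg (q : Fin n → ℕ) (S : Finset (Fin n)) : 0 ≤ wt q S :=
  Finset.sum_nonneg fun _ _ => Nat.cast_nonneg _

lemma EventOK.wt_aft_le {Q : ℕ} {q : Fin n → ℕ} {v : Event n} (h : EventOK Q q v) :
    wt q v.aft ≤ Q := by
  obtain ⟨lv, ov⟩ := v
  obtain ⟨-, h2, h3⟩ := h
  have h2' : ((Event.load q ⟨lv, ov⟩ : ℕ) : ℝ) ≤ Q := by exact_mod_cast h2
  cases lv <;> simp_all [Event.load, Event.aft, wt]
  linarith [Nat.cast_nonneg (α := ℝ) (q ‹_›)]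

lemma EventOK.wt_bef_le {Q : ℕ} {q : Fin n → ℕ} {v : Event n} (h : EventOK Q q v) :
    wt q v.bef ≤ Q := by
  obtain ⟨lv, ov⟩ := v
  obtain ⟨-, h2, h3⟩ := h
  have h2' : ((Event.load q ⟨lv, ov⟩ : ℕ) : ℝ) ≤ Q := by exact_mod_cast h2
  cases lv <;> simp_all [Event.load, Event.bef, wt]
  linarith [Nat.cast_nonneg (α := ℝ) (q ‹_›)]

section Feasible

variable {Q K : ℕ} {q : Fin n → ℕ} {s L : Fin n → ℝ} {t : Loc n → Loc n → ℝ} {e l : Loc n → ℝ}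
  {x : Event n → Event n → ℝ} {Bb : Loc n → ℝ}

/-! ### Flow through the events -/

lemma flowIn_nonneg (h : LAEB_LP Q K q s L t e l (Arc Q q) x Bb) (v : Event n) : 0 ≤ flowIn x v :=
  Finset.sum_nonneg fun _ _ => h.nonneg _ _

lemma flowIn_eq_zero (h : LAEB_LP Q K q s L t e l (Arc Q q) x Bb) {v : Event n}
    (hv : ¬ EventOK Q q v) : flowIn x v = 0 :=
  Finset.sum_eq_zero fun u _ => h.support u v fun ha => hv ha.2.1

lemma inflow_eq_s7 (h : LAEB_LP Q K q s L t e l (Arc Q q) x Bb) (v : Event n) :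
    inflow (Arc Q q) x v = flowIn x v := by
  refine Finset.sum_congr rfl fun u _ => ?_
  split_ifs with ha
  · rfl
  · exact (h.support _ _ ha).symm

lemma flowIn_eq_sum_out (h : LAEB_LP Q K q s L t e l (Arc Q q) x Bb) (v : Event n) :
    flowIn x v = ∑ w, x v w := by
  by_cases hv : EventOK Q q v
  · rw [← inflow_eq_s7 h, h.flow v hv]
    refine Finset.sum_congr rfl fun u _ => ?_
    split_ifs with ha
    · rfl
    · exact (h.support _ _ ha).symm
  · rw [flowIn_eq_zero h hv]
    exact (Finset.sum_eq_zero fun w _ => h.support v w fun ha => hv ha.1).symm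

lemma xLocA_eq (h : LAEB_LP Q K q s L t e l (Arc Q q) x Bb) (i j : Loc n) :
    xLocA (Arc Q q) x i j =
      ∑ v : Event n, ∑ w : Event n, if v.loc = i ∧ w.loc = j then x v w else 0 := by
  refine Finset.sum_congr rfl fun v _ => Finset.sum_congr rfl fun w _ => ?_
  by_cases ha : Arc Q q v w
  · simp [ha]
  · simp [ha, h.support v w ha]

lemma mul_aft_eq_mul_bef (h : LAEB_LP Q K q s L t e l (Arc Q q) x Bb)
    (g : Finset (Fin n) → ℝ) (v w : Event n) : x v w * g v.aft = x v w * g w.bef := by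
  by_cases ha : Arc Q q v w
  · rw [ha.2.2.aft_eq_bef]
  · simp [h.support v w ha]

/-- The set of customers aboard is conserved along arcs, and flow is conserved at events, so the
two flow-weighted totals agree. -/
lemma sum_aft_eq_sum_bef (h : LAEB_LP Q K q s L t e l (Arc Q q) x Bb)
    (g : Finset (Fin n) → ℝ) :
    ∑ v, flowIn x v * g v.aft = ∑ v, flowIn x v * g v.bef := by
  calc ∑ v, flowIn x v * g v.aft = ∑ v, ∑ w, x v w * g v.aft := by
        refine Finset.sum_congr rfl fun v _ => ?_
        rw [flowIn_eq_sum_out h, Finset.sum_mul]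
    _ = ∑ v, ∑ w, x v w * g w.bef := by simp only [mul_aft_eq_mul_bef h]
    _ = ∑ w, ∑ v, x v w * g w.bef := Finset.sum_comm
    _ = ∑ v, flowIn x v * g v.bef := by simp only [flowIn, Finset.sum_mul]

/-! ### Every request location carries one unit of flow -/

lemma mass_pick (h : LAEB_LP Q K q s L t e l (Arc Q q) x Bb) (i : Fin n) :
    mass x (.pick i) = 1 := by
  rw [← h.pickup i]
  refine Finset.sum_congr rfl fun v _ => ?_
  by_cases hv : EventOK Q q v
  · simp [hv, inflow_eq_s7 h]
  · simp [hv, flowIn_eq_zero h hv]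

/-- Customer `i` joins the set aboard exactly at the events of `i⁺` and leaves it exactly at the
events of `i⁻`, so these two families of events carry the same flow. -/
lemma mass_drop (h : LAEB_LP Q K q s L t e l (Arc Q q) x Bb) (i : Fin n) :
    mass x (.drop i) = 1 := by
  have key := sum_aft_eq_sum_bef h (fun S => if i ∈ S then 1 else 0)
  have hpt : ∀ v : Event n,
      flowIn x v * (if i ∈ v.aft then 1 else 0) + (if v.loc = .drop i then flowIn x v else 0) =
      flowIn x v * (if i ∈ v.bef then 1 else 0) + (if v.loc = .pick i then flowIn x v else 0) := by
    intro v
    by_cases hv : EventOK Q q v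
    · have h3 := hv.2.2
      obtain ⟨lv, ov⟩ := v
      cases lv with
      | depot => simp [Event.aft, Event.bef]
      | pick k =>
        by_cases hk : k = i
        · subst hk; simp_all [Event.aft, Event.bef]
        · by_cases hi : i ∈ ov <;> simp [Event.aft, Event.bef, hk, Ne.symm hk, hi]
      | drop k =>
        by_cases hk : k = i
        · subst hk; simp_all [Event.aft, Event.bef]
        · by_cases hi : i ∈ ov <;> simp [Event.aft, Event.bef, hk, Ne.symm hk, hi]
    · simp [flowIn_eq_zero h hv]
  have hsum := Finset.sum_congr (rfl : (univ : Finset (Event n)) = univ) fun v _ => hpt v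
  rw [Finset.sum_add_distrib, Finset.sum_add_distrib] at hsum
  have hp := mass_pick h i
  unfold mass at hp ⊢
  linarith

/-! ### The load variables as average loads -/

lemma loadTerm_eq (h : LAEB_LP Q K q s L t e l (Arc Q q) x Bb) (j : Loc n) :
    loadTerm Q q x j = ∑ v : Event n, if v.loc = j then flowIn x v * wt q v.others else 0 := by
  unfold loadTerm
  rw [Finset.sum_comm]
  refine Finset.sum_congr rfl fun v _ => ?_
  split_ifs with hj
  · rw [flowIn, Finset.sum_mul]
    refine Finset.sum_congr rfl fun u _ => ?_
    by_cases ha : Arc Q q u v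
    · simp [ha, hj, wt]
    · simp [ha, h.support u v ha]
  · simp [hj]

/-- At the events of one location, comparing two loads that differ by a constant `c`. -/
lemma sum_shift (h : LAEB_LP Q K q s L t e l (Arc Q q) x Bb) {j : Loc n} (hm : mass x j = 1)
    (c : ℝ) (a b : Event n → ℝ) (hab : ∀ v, EventOK Q q v → v.loc = j → a v = c + b v) :
    (∑ v : Event n, if v.loc = j then flowIn x v * a v else 0) =
      c + ∑ v : Event n, if v.loc = j then flowIn x v * b v else 0 := by
  have : c = ∑ v : Event n, (if v.loc = j then flowIn x v else 0) * c := by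
    rw [← Finset.sum_mul]
    unfold mass at hm
    rw [hm, one_mul]
  conv_rhs => rw [this]
  rw [← Finset.sum_add_distrib]
  refine Finset.sum_congr rfl fun v _ => ?_
  by_cases hv : EventOK Q q v
  · split_ifs with hj
    · rw [hab v hv hj]; ring
    · simp
  · simp [flowIn_eq_zero h hv]

lemma avgAft_depot : avgAft q x .depot = 0 :=
  Finset.sum_eq_zero fun v _ => by
    split_ifs with hj
    · simp [Event.aft, hj, wt]
    · rfl

lemma avgBef_depot : avgBef q x .depot = 0 :=
  Finset.sum_eq_zero fun v _ => by
    split_ifs with hj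
    · simp [Event.bef, hj, wt]
    · rfl

lemma QlOf_eq_avgAft (h : LAEB_LP Q K q s L t e l (Arc Q q) x Bb) (j : LocB n) :
    QlOf Q q x j = avgAft q x j.toLoc := by
  cases j with
  | start => simp [QlOf, LocB.toLoc, avgAft_depot]
  | finish => simp [QlOf, LocB.toLoc, avgAft_depot]
  | pick i =>
    simp only [QlOf, LocB.toLoc, loadTerm_eq h]
    refine (sum_shift h (mass_pick h i) _ _ _ fun v hv hj => ?_).symm
    have h3 := hv.2.2
    simp only [hj] at h3
    simp [Event.aft, hj, wt, Finset.sum_insert h3]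
  | drop i =>
    simp only [QlOf, LocB.toLoc, loadTerm_eq h]
    refine Finset.sum_congr rfl fun v _ => ?_
    split_ifs with hj
    · simp [Event.aft, hj]
    · rfl

lemma QlOf_eq_avgBef (h : LAEB_LP Q K q s L t e l (Arc Q q) x Bb) (j : LocB n) :
    QlOf Q q x j = indLB j * qLB q j + avgBef q x j.toLoc := by
  cases j with
  | start => simp [QlOf, LocB.toLoc, avgBef_depot, qLB]
  | finish => simp [QlOf, LocB.toLoc, avgBef_depot, qLB]
  | pick i =>
    simp only [QlOf, LocB.toLoc, loadTerm_eq h, indLB, qLB, one_mul, avgBef]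
    congr 1
    refine Finset.sum_congr rfl fun v _ => ?_
    by_cases hj : v.loc = .pick i <;> simp [Event.bef, hj]
  | drop i =>
    simp only [QlOf, LocB.toLoc, loadTerm_eq h, indLB, qLB]
    refine sum_shift h (mass_drop h i) _ _ _ fun v hv hj => ?_
    have h3 := hv.2.2
    simp only [hj] at h3
    simp [Event.bef, hj, wt, Finset.sum_insert h3]

lemma mass_eq_one (h : LAEB_LP Q K q s L t e l (Arc Q q) x Bb) {j : Loc n} (hj : j ≠ .depot) :
    mass x j = 1 := by
  cases j with
  | depot => exact absurd rfl hj
  | pick i => exact mass_pick h i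
  | drop i => exact mass_drop h i

/-! ### Bounds on average loads -/

/-- An average over the events of a location of a load lying in `[0, Q]` lies in `[0, Q]`. -/
lemma avg_mem (h : LAEB_LP Q K q s L t e l (Arc Q q) x Bb) {j : Loc n} (hm : mass x j = 1)
    (a : Event n → ℝ) (h0 : ∀ v, 0 ≤ a v) (hQ : ∀ v, EventOK Q q v → a v ≤ Q) :
    0 ≤ (∑ v : Event n, if v.loc = j then flowIn x v * a v else 0) ∧
      (∑ v : Event n, if v.loc = j then flowIn x v * a v else 0) ≤ Q := by
  constructor
  · refine Finset.sum_nonneg fun v _ => ?_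
    split_ifs
    · exact mul_nonneg (flowIn_nonneg h v) (h0 v)
    · exact le_rfl
  · calc (∑ v : Event n, if v.loc = j then flowIn x v * a v else 0)
        ≤ ∑ v : Event n, (if v.loc = j then flowIn x v else 0) * (Q : ℝ) := by
          refine Finset.sum_le_sum fun v _ => ?_
          by_cases hv : EventOK Q q v
          · split_ifs
            · exact mul_le_mul_of_nonneg_left (hQ v hv) (flowIn_nonneg h v)
            · simp
          · simp [flowIn_eq_zero h hv]
      _ = Q := by
          rw [← Finset.sum_mul]
          unfold mass at hm
          rw [hm, one_mul]

lemma avgAft_mem (h : LAEB_LP Q K q s L t e l (Arc Q q) x Bb) (j : Loc n) :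
    0 ≤ avgAft q x j ∧ avgAft q x j ≤ Q := by
  by_cases hj : j = .depot
  · subst hj; simp [avgAft_depot]
  · exact avg_mem h (mass_eq_one h hj) _ (fun v => wt_nonneg q _) fun v hv => hv.wt_aft_le

lemma avgBef_mem (h : LAEB_LP Q K q s L t e l (Arc Q q) x Bb) (j : Loc n) :
    0 ≤ avgBef q x j ∧ avgBef q x j ≤ Q := by
  by_cases hj : j = .depot
  · subst hj; simp [avgBef_depot]
  · exact avg_mem h (mass_eq_one h hj) _ (fun v => wt_nonneg q _) fun v hv => hv.wt_bef_le

lemma xLocA_le_mass (h : LAEB_LP Q K q s L t e l (Arc Q q) x Bb) (i j : Loc n) :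
    xLocA (Arc Q q) x i j ≤ mass x j := by
  rw [xLocA_eq h, Finset.sum_comm]
  refine Finset.sum_le_sum fun w _ => ?_
  by_cases hw : w.loc = j
  · simp only [hw, and_true, if_true]
    refine Finset.sum_le_sum fun v _ => ?_
    split_ifs
    · exact le_rfl
    · exact h.nonneg _ _
  · simp [hw]

/-- The part of the flow leaving `i` that does not go to `j` has total amount `1 - x̄_{ij}` and
carries a load of at most `Q` per unit; the part going to `j` carries a load that is also counted
on arriving at `j`. -/
lemma avgAft_le (h : LAEB_LP Q K q s L t e l (Arc Q q) x Bb) {i : Loc n} (hi : i ≠ .depot)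
    (j : Loc n) :
    avgAft q x i ≤ avgBef q x j + (Q : ℝ) * (1 - xLocA (Arc Q q) x i j) := by
  -- Arc by arc: load out of `i`, plus `Q` times the flow from `i` to `j`, is at most the load
  -- into `j` plus `Q` times the flow out of `i`.
  have hpt : ∀ v w : Event n,
      (if v.loc = i then x v w * wt q v.aft else 0)
        + (Q : ℝ) * (if v.loc = i ∧ w.loc = j then x v w else 0)
      ≤ (if w.loc = j then x v w * wt q w.bef else 0)
        + (Q : ℝ) * (if v.loc = i then x v w else 0) := by
    intro v w
    rw [← mul_aft_eq_mul_bef h (wt q)]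
    by_cases ha : Arc Q q v w
    · have h1 := mul_le_mul_of_nonneg_left ha.1.wt_aft_le (h.nonneg v w)
      have h0 := mul_nonneg (h.nonneg v w) (wt_nonneg q v.aft)
      by_cases hv : v.loc = i <;> by_cases hw : w.loc = j <;> simp [hv, hw] <;> linarith
    · simp [h.support v w ha]
  have hsum := Finset.sum_le_sum fun v (_ : v ∈ (univ : Finset (Event n))) =>
    Finset.sum_le_sum fun w (_ : w ∈ (univ : Finset (Event n))) => hpt v w
  simp only [Finset.sum_add_distrib, ← Finset.mul_sum] at hsum
  rw [← xLocA_eq h] at hsum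
  have e1 : (∑ v : Event n, ∑ w : Event n, if v.loc = i then x v w * wt q v.aft else 0) =
      avgAft q x i := by
    refine Finset.sum_congr rfl fun v _ => ?_
    split_ifs
    · rw [flowIn_eq_sum_out h, Finset.sum_mul]
    · simp
  have e2 : (∑ v : Event n, ∑ w : Event n, if w.loc = j then x v w * wt q w.bef else 0) =
      avgBef q x j := by
    rw [Finset.sum_comm]
    refine Finset.sum_congr rfl fun w _ => ?_
    split_ifs
    · rw [flowIn, Finset.sum_mul]
    · simp
  have e3 : (∑ v : Event n, ∑ w : Event n, if v.loc = i then x v w else 0) = 1 := by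
    rw [← mass_eq_one h hi]
    refine Finset.sum_congr rfl fun v _ => ?_
    split_ifs
    · rw [flowIn_eq_sum_out h]
    · simp
  rw [e1, e2, e3] at hsum
  linarith

end Feasible

/-! ### The load constraints -/

/-- **Capacity constraints are implied by the event-based relaxation.**
Let `(x, B̄)` be feasible for the LP relaxation of the LAEB formulation, set
`x̄_{ij} = Σ_{(v,w) ∈ A : v₁=i, w₁=j} x_{(v,w)}` (with `x̄_{0⁺j} = x̄_{0j}` and
`x̄_{i0⁻} = x̄_{i0}`), `Q_{0⁺} = Q_{0⁻} = 0`, and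
`Q_j = 𝕀⁺_j q_j + Σ_{(u,v) ∈ A : v₁=j} x_{(u,v)} Σ_{l=2}^{Q} q_{v_l}` for
`j ∈ P ∪ D`.  Then the load constraints of the LB formulation hold:
`Q_j ≥ Q_i + 𝕀_j q_j − Q(1 − x̄_{ij})` for all `i, j ∈ J̄`, and
`max{0, 𝕀_j q_j} ≤ Q_j ≤ min{Q, Q + 𝕀_j q_j}` for all `j ∈ J̄`. -/
theorem capacity_constraints_implied
    (Q K : ℕ) (q : Fin n → ℕ) (s L : Fin n → ℝ)
    (t : Loc n → Loc n → ℝ) (e l : Loc n → ℝ)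
    (x : Event n → Event n → ℝ) (Bb : Loc n → ℝ)
    (hfeas : LAEB_LP Q K q s L t e l (Arc Q q) x Bb) :
    (∀ i j : LocB n,
      QlOf Q q x j ≥ QlOf Q q x i + indLB j * qLB q j
        - (Q : ℝ) * (1 - xbOf (xLocA (Arc Q q) x) i j)) ∧
    (∀ j : LocB n,
      max 0 (indLB j * qLB q j) ≤ QlOf Q q x j ∧
      QlOf Q q x j ≤ min (Q : ℝ) ((Q : ℝ) + indLB j * qLB q j)) := by
  refine ⟨fun i j => ?_, fun j => ?_⟩
  · rw [QlOf_eq_avgBef hfeas j, QlOf_eq_avgAft hfeas i]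
    have hA := avgAft_mem hfeas i.toLoc
    have hB := avgBef_mem hfeas j.toLoc
    have hQ : (0 : ℝ) ≤ Q := Nat.cast_nonneg _
    suffices avgAft q x i.toLoc ≤ avgBef q x j.toLoc
        + (Q : ℝ) * (1 - xbOf (xLocA (Arc Q q) x) i j) by linarith
    -- For `i = 0⁺` the left side vanishes and `x̄_{0j} ≤ 1` suffices; for pairs without arcs
    -- `x̄_{ij} = 0`, and the load on leaving `i` is at most `Q`.
    have hfar : ∀ j' : Loc n, j' ≠ .depot → avgAft q x (.depot : Loc n) ≤
        avgBef q x j' + (Q : ℝ) * (1 - xLocA (Arc Q q) x .depot j') := by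
      intro j' hj'
      rw [avgAft_depot]
      have h1 := xLocA_le_mass hfeas .depot j'
      rw [mass_eq_one hfeas hj'] at h1
      exact add_nonneg (avgBef_mem hfeas j').1 (mul_nonneg hQ (by linarith))
    cases i <;> cases j <;> simp only [xbOf, LocB.toLoc] at * <;>
      first
      | linarith
      | exact hfar _ (by simp)
      | exact avgAft_le hfeas (by simp) _
  · have hA := avgAft_mem hfeas j.toLoc
    have hB := avgBef_mem hfeas j.toLoc
    have h1 := QlOf_eq_avgAft hfeas j
    have h2 := QlOf_eq_avgBef hfeas j
    exact ⟨max_le (by linarith) (by linarith), le_min (by linarith) (by linarith)⟩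
end
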